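/- arXiv:1707.04830 — 2 statements merged into one kernel-verified Lean document; each statement's English description precedes it below -/
import Mathlib

section
/- Let a, b ∈ [0,1] and let A′, B′ be convex bodies in ℝ² with L_a ⊆ A′ ⊆ U_a and L_b ⊆ B′ ⊆ U_b. Then there exist an invertible affine map T : ℝ² → ℝ² and a homothety h with ratio 3 − a such that T(B′) ⊆ A′ ⊆ h(T(B′)); in particular, the Banach–Mazur distance between A′ and B′ is at most 3 − a. -/
/-- A convex body in the plane: compact, convex, with nonempty interior. -/
def IsConvexBody (A : Set (ℝ × ℝ)) : Prop :=
  Convex ℝ A ∧ IsCompact A ∧ (interior A).Nonempty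

/-- The 7-gon `L_a` with vertices (0, 2a/(1+a)), (±1,1), (±2,2), (±1,3). -/
noncomputable def L (a : ℝ) : Set (ℝ × ℝ) :=
  convexHull ℝ {((0 : ℝ), 2 * a / (1 + a)), (1, 1), (-1, 1), (2, 2), (-2, 2), (1, 3), (-1, 3)}

/-- The polygon `U_a` from Definition 2.1. -/
noncomputable def U (a : ℝ) : Set (ℝ × ℝ) :=
  if a < 1 / 2 then
    convexHull ℝ {((a : ℝ), a), (-a, a), (2 + a, 2 - a), (-(2 + a), 2 - a),
      (3 - a, 3 - a), (-(3 - a), 3 - a), (3 - 2 * a, 3), (-(3 - 2 * a), 3),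
      (a, 4 - a), (-a, 4 - a)}
  else
    convexHull ℝ {((a : ℝ), a), (-a, a), (3 - 2 * a, 1), (-(3 - 2 * a), 1),
      (3 - a, 1 + a), (-(3 - a), 1 + a), (3 - a, 3 - a), (-(3 - a), 3 - a),
      (3 - 2 * a, 3), (-(3 - 2 * a), 3), (a, 4 - a), (-a, 4 - a)}

/-- The Banach–Mazur distance: the infimum of λ > 0 such that T(A) ⊆ B ⊆ h(T(A)) for some
invertible affine map T and homothety h with ratio λ. -/
noncomputable def BMdist (A B : Set (ℝ × ℝ)) : ℝ :=
  sInf {l : ℝ | 0 < l ∧ ∃ (T : ℝ × ℝ ≃ᵃ[ℝ] ℝ × ℝ) (c : ℝ × ℝ),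
    T '' A ⊆ B ∧ B ⊆ AffineMap.homothety c l '' (T '' A)}

/-!
The hexagon `K` with vertices `(±2, 2)`, `(±1, 1)`, `(±1, 3)` lies in every `L c`. Let `T` be the
affine map that fixes `(0, 2)`, exchanges the two axes through it and contracts one of them by `3`,
so that `T ∘ T` is the homothety of ratio `1 / 3` centred at `(0, 2)`. Inspecting vertices, `U c`
lies in the copy of `T K` blown up by `3 - c` about `(0, 2)`; this copy lies in the one blown up
by `3`, which `T` maps onto `K`. Hence `T B' ⊆ T (U b) ⊆ K ⊆ L a ⊆ A'`, while `A' ⊆ U a` lies in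
the blow-up by `3 - a` of `T K ⊆ T (L b) ⊆ T B'`.
-/

lemma BMdist_le {A B : Set (ℝ × ℝ)} {l : ℝ} (hl : 0 < l) (T : ℝ × ℝ ≃ᵃ[ℝ] ℝ × ℝ) (c : ℝ × ℝ)
    (hAB : T '' A ⊆ B) (hBA : B ⊆ AffineMap.homothety c l '' (T '' A)) : BMdist A B ≤ l :=
  csInf_le ⟨0, fun _ h => h.1.le⟩ ⟨hl, T, c, hAB, hBA⟩

/-- The hexagon with vertices `(±2, 2)`, `(±1, 1)` and `(±1, 3)`, the common core of all `L c`,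
given by the inequalities of its sides. -/
def hexagon : Set (ℝ × ℝ) :=
  {p | |p.1| + |p.2 - 2| ≤ 2 ∧ |p.2 - 2| ≤ 1}

lemma convex_hexagon : Convex ℝ hexagon := by
  have hfst : ConvexOn ℝ Set.univ fun p : ℝ × ℝ => |p.1| :=
    convexOn_univ_norm.comp_linearMap (LinearMap.fst ℝ ℝ ℝ)
  have hsnd : ConvexOn ℝ Set.univ fun p : ℝ × ℝ => |p.2 - 2| :=
    (convexOn_univ_dist (2 : ℝ)).comp_linearMap (LinearMap.snd ℝ ℝ ℝ)
  simpa [hexagon, Set.ofPred_and] using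
    ((hfst.add hsnd).convex_le 2).inter (hsnd.convex_le 1)

lemma mk_mem_of_convex_of_abs_le {F : Type*} [AddCommGroup F] [Module ℝ F] {S : Set (ℝ × F)}
    (hS : Convex ℝ S) {m x : ℝ} {y : F} (hx : |x| ≤ m)
    (hleft : (-m, y) ∈ S) (hright : (m, y) ∈ S) : (x, y) ∈ S := by
  apply hS.segment_subset hleft hright
  rw [← Prod.image_mk_segment_left, segment_eq_Icc (by linarith [abs_nonneg x])]
  exact Set.mem_image_of_mem _ (abs_le.mp hx)

lemma hexagon_subset_convexHull :
    hexagon ⊆ convexHull ℝ {((1 : ℝ), (1 : ℝ)), (-1, 1), (2, 2), (-2, 2), (1, 3), (-1, 3)} := by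
  set H : Set (ℝ × ℝ) := convexHull ℝ _
  have hconv : Convex ℝ H := convex_convexHull ℝ _
  rintro ⟨x, y⟩ ⟨hxy, hy⟩
  have on_side {s : ℝ} (bottom : (s, 1) ∈ H) (middle : (s * 2, 2) ∈ H) (top : (s, 3) ∈ H) :
      (s * (2 - |y - 2|), y) ∈ H := by
    have ht : |y - 2| ∈ Set.Icc (0 : ℝ) 1 := ⟨abs_nonneg _, hy⟩
    rcases le_total 2 y with h | h
    · convert hconv.lineMap_mem middle top ht using 1
      ext <;> simp only [AffineMap.lineMap_apply_module, abs_of_nonneg (sub_nonneg.mpr h),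
        Prod.smul_mk, smul_eq_mul, Prod.mk_add_mk] <;> ring
    · convert hconv.lineMap_mem middle bottom ht using 1
      ext <;> simp only [AffineMap.lineMap_apply_module, abs_of_nonpos (sub_nonpos.mpr h),
        Prod.smul_mk, smul_eq_mul, Prod.mk_add_mk] <;> ring
  refine mk_mem_of_convex_of_abs_le hconv (m := 2 - |y - 2|) (le_sub_iff_add_le.mpr hxy) ?_ ?_
  · rw [← neg_one_mul]
    apply on_side <;> exact subset_convexHull ℝ _ (by norm_num)
  · rw [← one_mul (2 - |y - 2|)]
    apply on_side <;> exact subset_convexHull ℝ _ (by norm_num)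

lemma hexagon_subset_L (c : ℝ) : hexagon ⊆ L c :=
  hexagon_subset_convexHull.trans (convexHull_mono (Set.subset_insert _ _))

/-- The affine map `(x, y) ↦ (y - 2, 2 + x / 3)`, which exchanges the horizontal and the vertical
line through its fixed point `(0, 2)`. -/
noncomputable def contractingSwap : ℝ × ℝ ≃ᵃ[ℝ] ℝ × ℝ :=
  AffineEquiv.ofLinearEquiv
    ((LinearEquiv.prodComm ℝ ℝ ℝ).trans
      ((LinearEquiv.refl ℝ ℝ).prodCongr (LinearEquiv.smulOfNeZero ℝ ℝ 3⁻¹ (by norm_num))))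
    (0, 2) (0, 2)

lemma contractingSwap_apply (p : ℝ × ℝ) : contractingSwap p = (p.2 - 2, 2 + p.1 / 3) := by
  ext <;> simp [contractingSwap, div_eq_inv_mul, add_comm, sub_eq_add_neg]

lemma homothety_contractingSwap_apply (r : ℝ) (p : ℝ × ℝ) :
    AffineMap.homothety ((0 : ℝ), (2 : ℝ)) r (contractingSwap p) =
      (r * (p.2 - 2), 2 + r * (p.1 / 3)) := by
  simp [contractingSwap_apply, AffineMap.homothety_apply, add_comm]

lemma contractingSwap_mem_hexagon {p : ℝ × ℝ} :
    contractingSwap p ∈ hexagon ↔ |p.1| ≤ 3 ∧ |p.1| + 3 * |p.2 - 2| ≤ 6 := by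
  have habs : |p.1 / 3| = |p.1| / 3 := by rw [abs_div, Nat.abs_ofNat]
  simp only [hexagon, Set.mem_ofPred_eq, contractingSwap_apply, add_sub_cancel_left, habs]
  constructor <;> rintro ⟨_, _⟩ <;> constructor <;> linarith

/-- The hexagon `contractingSwap '' hexagon` scaled by `r` about its centre `(0, 2)`; the ratio
`r = 3 - c` gives the outer hexagon around `U c`. -/
def swappedHexagon (r : ℝ) : Set (ℝ × ℝ) :=
  AffineMap.homothety ((0 : ℝ), (2 : ℝ)) r '' (contractingSwap '' hexagon)

lemma convex_swappedHexagon (r : ℝ) : Convex ℝ (swappedHexagon r) :=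
  (convex_hexagon.affine_image contractingSwap.toAffineMap).affine_image _

lemma mem_swappedHexagon {r : ℝ} (hr : 0 < r) {p : ℝ × ℝ} :
    p ∈ swappedHexagon r ↔ |p.1| ≤ r ∧ |p.1| + 3 * |p.2 - 2| ≤ 2 * r := by
  have preimage_eq (q : ℝ × ℝ) :
      AffineMap.homothety ((0 : ℝ), (2 : ℝ)) r (contractingSwap q) = p ↔
        q = (3 * (p.2 - 2) / r, 2 + p.1 / r) := by
    rw [homothety_contractingSwap_apply]
    constructor <;> rintro rfl <;> ext <;> field_simp <;> ring
  have hfst : |p.1 / r| = |p.1| / r := by rw [abs_div, abs_of_pos hr]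
  have hsnd : |3 * (p.2 - 2) / r| = 3 * |p.2 - 2| / r := by
    rw [abs_div, abs_mul, abs_of_pos hr, Nat.abs_ofNat]
  simp only [swappedHexagon, Set.image_image, Set.mem_image, preimage_eq, exists_eq_right,
    hexagon, Set.mem_ofPred_eq, add_sub_cancel_left, hfst, hsnd]
  rw [← add_div, div_le_iff₀ hr, div_le_one hr, and_comm, add_comm]

lemma U_subset_swappedHexagon {c : ℝ} (hc : c ∈ Set.Icc (0 : ℝ) 1) :
    U c ⊆ swappedHexagon (3 - c) := by
  obtain ⟨hc0, hc1⟩ := hc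
  unfold U
  split_ifs <;> refine convexHull_min ?_ (convex_swappedHexagon _) <;>
    simp only [Set.insert_subset_iff, Set.singleton_subset_iff,
      mem_swappedHexagon (show 0 < 3 - c by linarith), abs_neg] <;>
    and_intros <;> grind

lemma contractingSwap_image_U_subset_hexagon {c : ℝ} (hc : c ∈ Set.Icc (0 : ℝ) 1) :
    contractingSwap '' U c ⊆ hexagon := by
  rintro _ ⟨p, hp, rfl⟩
  obtain ⟨hfst, hsum⟩ :=
    (mem_swappedHexagon (by linarith [hc.2])).mp (U_subset_swappedHexagon hc hp)
  exact contractingSwap_mem_hexagon.mpr ⟨by linarith [hc.1], by linarith [hc.1]⟩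

theorem stmt_10_general (a b : ℝ) (ha : a ∈ Set.Icc (0 : ℝ) 1) (hb : b ∈ Set.Icc (0 : ℝ) 1)
    (A' B' : Set (ℝ × ℝ)) (hLa : L a ⊆ A') (hUa : A' ⊆ U a) (hLb : L b ⊆ B') (hUb : B' ⊆ U b) :
    (∃ (T : ℝ × ℝ ≃ᵃ[ℝ] ℝ × ℝ) (c : ℝ × ℝ),
      T '' B' ⊆ A' ∧ A' ⊆ AffineMap.homothety c (3 - a) '' (T '' B')) ∧
    BMdist B' A' ≤ 3 - a := by
  have hTB : contractingSwap '' B' ⊆ A' :=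
    calc contractingSwap '' B' ⊆ contractingSwap '' U b := Set.image_mono hUb
      _ ⊆ hexagon := contractingSwap_image_U_subset_hexagon hb
      _ ⊆ L a := hexagon_subset_L a
      _ ⊆ A' := hLa
  have hAT : A' ⊆ AffineMap.homothety ((0 : ℝ), (2 : ℝ)) (3 - a) '' (contractingSwap '' B') :=
    calc A' ⊆ U a := hUa
      _ ⊆ swappedHexagon (3 - a) := U_subset_swappedHexagon ha
      _ ⊆ _ := Set.image_mono (Set.image_mono ((hexagon_subset_L b).trans hLb))
  exact ⟨⟨contractingSwap, _, hTB, hAT⟩, BMdist_le (by linarith [ha.2]) _ _ hTB hAT⟩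

theorem stmt_10 (a b : ℝ) (ha : a ∈ Set.Icc (0 : ℝ) 1) (hb : b ∈ Set.Icc (0 : ℝ) 1)
    (A' B' : Set (ℝ × ℝ)) (hA : IsConvexBody A') (hB : IsConvexBody B')
    (hLa : L a ⊆ A') (hUa : A' ⊆ U a) (hLb : L b ⊆ B') (hUb : B' ⊆ U b) :
    (∃ (T : ℝ × ℝ ≃ᵃ[ℝ] ℝ × ℝ) (c : ℝ × ℝ),
      T '' B' ⊆ A' ∧ A' ⊆ AffineMap.homothety c (3 - a) '' (T '' B')) ∧
    BMdist B' A' ≤ 3 - a :=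
  stmt_10_general a b ha hb A' B' hLa hUa hLb hUb
end

section
/- Let a, b ∈ [0,1/2) and let A′, B′ be convex bodies in ℝ² with L_a ⊆ A′ ⊆ U_a and L_b ⊆ B′ ⊆ U_b. Then there exist homotheties h₁ with ratio λ(a,b) and h₂ with ratio λ(b,a) such that B′ ⊆ h₁(A′) and A′ ⊆ h₂(B′); consequently A′ ⊆ h₂(h₁(A′)) and the Banach–Mazur distance between A′ and B′ is at most λ(a,b)·λ(b,a). -/
/-- The ratio λ(a,b) from Lemma 2.4. -/
noncomputable def lam (a b : ℝ) : ℝ :=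
  if b ≤ 3 * a / (2 * (1 + 2 * a)) then 1 + (1 - b) * (1 + 2 * a) / (2 + a) else 3 / 2

/-!
Since `L a ⊆ A'` and `B' ⊆ U b`, the inclusion `B' ⊆ h₁(A')` reduces to `U b ⊆ h₁(L a)`. The image
of `L a` under scaling by `l` and translating by `(0, t)` is cut out by four inequalities in `|x|`
and `y`, so only the five vertices of `U b` with nonnegative abscissa have to be tested against
them. Writing `s` for the ordinate of the lowest vertex of `L a`, a suitable `t` exists
for `l = max (3/2) ((6 - 2 * b - b * s) / (4 - s))`, and this maximum is `lam a b`. For the distance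
take `T = h₂⁻¹`: then `T(A') ⊆ B' ⊆ h₁(A') = (h₁ ∘ h₂)(T(A'))`, and `h₁ ∘ h₂` is again a homothety.
-/

section Homothety

open AffineMap

lemma homothety_homothety {k V P : Type*} [Field k] [AddCommGroup V] [Module k V] [AddTorsor V P]
    (c₁ c₂ p : P) {r₁ r₂ : k} (h : r₁ * r₂ ≠ 1) :
    homothety c₁ r₁ (homothety c₂ r₂ p) =
      homothety (lineMap c₁ c₂ (r₁ * (1 - r₂) / (1 - r₁ * r₂))) (r₁ * r₂) p := by
  have h' : 1 - r₁ * r₂ ≠ 0 := sub_ne_zero.2 h.symm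
  apply vsub_left_cancel (p := c₁)
  simp only [homothety_apply, lineMap_apply, vadd_vsub, vadd_vsub_assoc, vsub_vadd_eq_vsub_sub]
  rw [← vsub_sub_vsub_cancel_right p c₂ c₁]
  match_scalars
  · ring
  · field_simp
    ring

lemma homothety_inv_one_sub_smul {k V : Type*} [Field k] [AddCommGroup V] [Module k V]
    (v x : V) {r : k} (hr : r ≠ 1) : homothety ((1 - r)⁻¹ • v) r x = r • x + v := by
  have hr' : 1 - r ≠ 0 := sub_ne_zero.2 hr.symm
  rw [homothety_apply, vsub_eq_sub, vadd_eq_add]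
  match_scalars
  · ring
  · field_simp
    ring

lemma BMdist_le_mul_of_subset_homothety_image {A B : Set (ℝ × ℝ)} {c₁ c₂ : ℝ × ℝ} {l m : ℝ}
    (hl : 0 < l) (hm : 0 < m) (hlm : l * m ≠ 1) (hB : B ⊆ homothety c₁ l '' A)
    (hA : A ⊆ homothety c₂ m '' B) : BMdist A B ≤ l * m := by
  let H : ℝ × ℝ ≃ᵃ[ℝ] ℝ × ℝ := AffineEquiv.homothetyUnitsMulHom c₂ (Units.mk0 m hm.ne')
  have H_image (S : Set (ℝ × ℝ)) : H '' S = homothety c₂ m '' S := rfl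
  refine csInf_le ⟨0, fun r hr => hr.1.le⟩ ⟨mul_pos hl hm, H.symm,
    lineMap c₁ c₂ (l * (1 - m) / (1 - l * m)), ?_, ?_⟩
  · calc H.symm '' A ⊆ H.symm '' (H '' B) := Set.image_mono (H_image B ▸ hA)
      _ = B := H.toEquiv.symm_image_image B
  · calc B ⊆ homothety c₁ l '' A := hB
      _ = homothety c₁ l '' (homothety c₂ m '' (H.symm '' A)) := by
        rw [← H_image]
        exact congrArg _ (H.toEquiv.image_symm_image A).symm
      _ = homothety (lineMap c₁ c₂ (l * (1 - m) / (1 - l * m))) (l * m) '' (H.symm '' A) := by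
        rw [Set.image_image]
        exact Set.image_congr fun p _ => homothety_homothety c₁ c₂ p hlm

end Homothety

section Convex

variable {E : Type*} [AddCommGroup E] [Module ℝ E] {S : Set (ℝ × E)}

lemma mk_mem_of_convex_of_abs_le_s11 (hS : Convex ℝ S) {u x : ℝ} {y : E} (hl : (-u, y) ∈ S)
    (hr : (u, y) ∈ S) (hx : |x| ≤ u) : (x, y) ∈ S :=
  (hS.affine_preimage ((AffineMap.id ℝ ℝ).prod (AffineMap.const ℝ ℝ y))).ordConnected.out hl hr
    (abs_le.1 hx)

lemma mk_mem_of_convex_of_mem_trapezoid (hS : Convex ℝ S) {u v t x : ℝ} {p q y : E}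
    (hpl : (-u, p) ∈ S) (hpr : (u, p) ∈ S) (hql : (-v, q) ∈ S) (hqr : (v, q) ∈ S)
    (ht₀ : 0 ≤ t) (ht₁ : t ≤ 1) (hx : |x| ≤ (1 - t) * u + t * v) (hy : y = (1 - t) • p + t • q) :
    (x, y) ∈ S := by
  have hl := hS hpl hql (sub_nonneg.2 ht₁) ht₀ (sub_add_cancel 1 t)
  have hr := hS hpr hqr (sub_nonneg.2 ht₁) ht₀ (sub_add_cancel 1 t)
  simp only [Prod.smul_mk, Prod.mk_add_mk, smul_eq_mul, ← hy] at hl hr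
  exact mk_mem_of_convex_of_abs_le_s11 hS (by convert hl using 2; ring) hr hx

end Convex

lemma U_subset_of_abs_mem_vertices {b : ℝ} (hb₀ : 0 ≤ b) (hb : b < 1 / 2) {S : Set (ℝ × ℝ)}
    (hS : Convex ℝ S)
    (h : ∀ x y : ℝ, (|x|, y) ∈ ({(b, b), (2 + b, 2 - b), (3 - b, 3 - b), (3 - 2 * b, 3),
      (b, 4 - b)} : Set (ℝ × ℝ)) → (x, y) ∈ S) :
    U b ⊆ S := by
  have h₁ : |2 + b| = 2 + b := abs_of_nonneg (by linarith)
  have h₂ : |3 - b| = 3 - b := abs_of_nonneg (by linarith)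
  have h₃ : |3 - 2 * b| = 3 - 2 * b := abs_of_nonneg (by linarith)
  rw [U, if_pos hb]
  refine convexHull_min ?_ hS
  rintro p (rfl | rfl | rfl | rfl | rfl | rfl | rfl | rfl | rfl | rfl) <;> apply h <;>
    simp only [abs_neg, abs_of_nonneg hb₀, h₁, h₂, h₃, Set.mem_insert_iff, Set.mem_singleton_iff,
      true_or, or_true]

/-- The ordinate of the lowest vertex of `L a`; the edges of `L a` through this vertex have slopes
`±(1 - apexHeight a)`. -/
noncomputable def apexHeight (a : ℝ) : ℝ := 2 * a / (1 + a)

section Parameters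

variable {a : ℝ}

lemma apexHeight_nonneg (ha : 0 ≤ a) : 0 ≤ apexHeight a :=
  div_nonneg (by linarith) (by linarith)

lemma apexHeight_le_one (ha₀ : 0 ≤ a) (ha₁ : a ≤ 1) : apexHeight a ≤ 1 :=
  (div_le_one (by linarith)).2 (by linarith)

lemma lam_eq_max (ha : 0 ≤ a) (b : ℝ) :
    lam a b = max (3 / 2) ((6 - 2 * b - b * apexHeight a) / (4 - apexHeight a)) := by
  have quotient_eq : (6 - 2 * b - b * apexHeight a) / (4 - apexHeight a) =
      1 + (1 - b) * (1 + 2 * a) / (2 + a) := by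
    have h : 4 - apexHeight a = 2 * (2 + a) / (1 + a) := by
      rw [apexHeight]
      field_simp
      ring
    rw [h, apexHeight]
    field_simp
    ring
  have le_iff : b ≤ 3 * a / (2 * (1 + 2 * a)) ↔
      3 / 2 ≤ 1 + (1 - b) * (1 + 2 * a) / (2 + a) := by
    rw [le_div_iff₀ (by linarith), ← sub_le_iff_le_add', le_div_iff₀ (by linarith)]
    constructor <;> intro h <;> linarith
  rw [quotient_eq, lam]
  split_ifs with h
  · exact (max_eq_right (le_iff.1 h)).symm
  · exact (max_eq_left (not_le.1 (mt le_iff.2 h)).le).symm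

lemma three_halves_le_lam (ha : 0 ≤ a) (b : ℝ) : 3 / 2 ≤ lam a b :=
  lam_eq_max ha b ▸ le_max_left _ _

lemma le_lam_mul_four_sub_apexHeight (ha₀ : 0 ≤ a) (ha₁ : a ≤ 1) (b : ℝ) :
    6 - 2 * b - b * apexHeight a ≤ lam a b * (4 - apexHeight a) := by
  have hs := apexHeight_le_one ha₀ ha₁
  rw [← div_le_iff₀ (by linarith), lam_eq_max ha₀]
  exact le_max_right _ _

lemma lam_le_two (ha₀ : 0 ≤ a) (ha₁ : a ≤ 1) {b : ℝ} (hb : 0 ≤ b) : lam a b ≤ 2 := by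
  have hs₀ := apexHeight_nonneg ha₀
  have hs₁ := apexHeight_le_one ha₀ ha₁
  have hbs := mul_nonneg hb hs₀
  rw [lam_eq_max ha₀]
  exact max_le (by norm_num) ((div_le_iff₀ (by linarith)).2 (by linarith))

end Parameters

lemma mk_mem_L {a x y : ℝ} (hside : |x| ≤ y) (hshoulder : |x| + y ≤ 4) (htop : y ≤ 3)
    (hapex : apexHeight a + (1 - apexHeight a) * |x| ≤ y) : (x, y) ∈ L a := by
  have hconv : Convex ℝ (L a) := convex_convexHull ℝ _
  have hsub := subset_convexHull ℝ ({((0 : ℝ), 2 * a / (1 + a)), (1, 1), (-1, 1), (2, 2), (-2, 2),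
    (1, 3), (-1, 3)} : Set (ℝ × ℝ))
  have h₀ : (0, apexHeight a) ∈ L a := hsub (by simp [apexHeight])
  have h₀' : (-0, apexHeight a) ∈ L a := by rwa [neg_zero]
  have h₁ : (1, 1) ∈ L a := hsub (by simp)
  have h₁' : (-1, 1) ∈ L a := hsub (by simp)
  have h₂ : (2, 2) ∈ L a := hsub (by simp)
  have h₂' : (-2, 2) ∈ L a := hsub (by simp)
  have h₃ : (1, 3) ∈ L a := hsub (by simp)
  have h₃' : (-1, 3) ∈ L a := hsub (by simp)
  have hx := abs_nonneg x
  rcases lt_or_ge y 1 with hy₁ | hy₁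
  · have hs : 0 < 1 - apexHeight a :=
      pos_of_mul_pos_left (b := 1 - |x|) (by linarith) (by linarith)
    refine mk_mem_of_convex_of_mem_trapezoid hconv (t := (y - apexHeight a) / (1 - apexHeight a))
      h₀' h₀ h₁' h₁ (div_nonneg (by linarith [mul_nonneg hs.le hx]) hs.le)
      ((div_le_one hs).2 (by linarith)) ?_ ?_
    · rw [mul_zero, zero_add, mul_one, le_div_iff₀ hs]
      linarith
    · rw [smul_eq_mul, smul_eq_mul]
      field_simp
      ring
  rcases le_total y 2 with hy₂ | hy₂
  · exact mk_mem_of_convex_of_mem_trapezoid hconv (t := y - 1) h₁' h₁ h₂' h₂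
      (by linarith) (by linarith) (by linarith) (by ring)
  · exact mk_mem_of_convex_of_mem_trapezoid hconv (t := y - 2) h₂' h₂ h₃' h₃
      (by linarith) (by linarith) (by linarith) (by ring)

lemma mk_mem_homothety_image_L {a l t x y : ℝ} (hl : 1 < l) (hside : |x| ≤ y - t)
    (hshoulder : |x| + (y - t) ≤ 4 * l) (htop : y - t ≤ 3 * l)
    (hapex : apexHeight a * l + (1 - apexHeight a) * |x| ≤ y - t) :
    (x, y) ∈ AffineMap.homothety ((1 - l)⁻¹ • ((0 : ℝ), t)) l '' L a := by
  have hl₀ : 0 < l := by linarith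
  have habs : |x / l| = |x| / l := by rw [abs_div, abs_of_pos hl₀]
  refine ⟨(x / l, (y - t) / l), mk_mem_L ?_ ?_ ?_ ?_, ?_⟩
  · rw [habs]
    gcongr
  · rwa [habs, ← add_div, div_le_iff₀ hl₀]
  · rwa [div_le_iff₀ hl₀]
  · rw [habs, le_div_iff₀ hl₀]
    field_simp
    linarith
  · rw [homothety_inv_one_sub_smul _ _ hl.ne']
    ext
    · simp only [Prod.smul_mk, Prod.mk_add_mk, smul_eq_mul, add_zero]
      exact mul_div_cancel₀ x hl₀.ne'
    · simp only [Prod.smul_mk, Prod.mk_add_mk, smul_eq_mul]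
      rw [mul_div_cancel₀ _ hl₀.ne', sub_add_cancel]

lemma exists_vertical_translation {s b l : ℝ} (hs₁ : s ≤ 1) (hb : b ≤ 1 / 2)
    (hl : 3 / 2 ≤ l) (hls : 6 - 2 * b - b * s ≤ l * (4 - s)) :
    ∃ t, t ≤ -2 * b ∧ t ≤ s * (b - l) ∧ 6 - 2 * b - 4 * l ≤ t ∧ 4 - b - 3 * l ≤ t := by
  -- With `s = apexHeight a`, the bounds say that `(2 + b, 2 - b)` and `(b, b)` lie above the lower
  -- edges of `l • L a + (0, t)`, and `(3 - b, 3 - b)` and `(b, 4 - b)` below its upper edges.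
  refine ⟨min (-2 * b) (s * (b - l)), min_le_left _ _, min_le_right _ _,
    le_min (by linarith) (by linarith), le_min (by linarith) ?_⟩
  have h : 0 ≤ (3 - s) * (l * (4 - s) - (6 - 2 * b - b * s)) + 2 * ((1 - b) * (1 - s)) :=
    add_nonneg (mul_nonneg (by linarith) (sub_nonneg.2 hls))
      (mul_nonneg zero_le_two (mul_nonneg (by linarith) (by linarith)))
  have hs : 0 < 4 - s := by linarith
  refine le_of_mul_le_mul_left ?_ hs
  linarith

lemma exists_U_subset_homothety_image_L {a b : ℝ} (ha₀ : 0 ≤ a) (ha₁ : a ≤ 1) (hb₀ : 0 ≤ b)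
    (hb : b < 1 / 2) : ∃ c : ℝ × ℝ, U b ⊆ AffineMap.homothety c (lam a b) '' L a := by
  have hs₀ := apexHeight_nonneg ha₀
  have hl := three_halves_le_lam ha₀ b
  obtain ⟨t, ht_side, ht_apex, ht_shoulder, ht_top⟩ :=
    exists_vertical_translation (apexHeight_le_one ha₀ ha₁) hb.le hl
      (le_lam_mul_four_sub_apexHeight ha₀ ha₁ b)
  have hsb : 0 ≤ apexHeight a * b := mul_nonneg hs₀ hb₀
  have hsb' : 0 ≤ apexHeight a * (1 / 2 - b) := mul_nonneg hs₀ (by linarith)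
  have hsl : 0 ≤ apexHeight a * (2 - lam a b) :=
    mul_nonneg hs₀ (sub_nonneg.2 (lam_le_two ha₀ ha₁ hb₀))
  refine ⟨(1 - lam a b)⁻¹ • ((0 : ℝ), t), U_subset_of_abs_mem_vertices hb₀ hb
    ((convex_convexHull ℝ _).affine_image _) fun x y hxy => ?_⟩
  simp only [Set.mem_insert_iff, Set.mem_singleton_iff, Prod.mk.injEq] at hxy
  rcases hxy with ⟨hx, rfl⟩ | ⟨hx, rfl⟩ | ⟨hx, rfl⟩ | ⟨hx, rfl⟩ | ⟨hx, rfl⟩ <;>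
    refine mk_mem_homothety_image_L (by linarith) ?_ ?_ (by linarith) ?_ <;>
    rw [hx] <;> linarith

theorem stmt_11_general {a b : ℝ} (ha : a ∈ Set.Ico (0 : ℝ) (1 / 2))
    (hb : b ∈ Set.Ico (0 : ℝ) (1 / 2)) {A' B' : Set (ℝ × ℝ)}
    (hLa : L a ⊆ A') (hUa : A' ⊆ U a) (hLb : L b ⊆ B') (hUb : B' ⊆ U b) :
    (∃ (c₁ c₂ : ℝ × ℝ),
      B' ⊆ AffineMap.homothety c₁ (lam a b) '' A' ∧
      A' ⊆ AffineMap.homothety c₂ (lam b a) '' B' ∧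
      A' ⊆ AffineMap.homothety c₂ (lam b a) ''
        (AffineMap.homothety c₁ (lam a b) '' A')) ∧
    BMdist A' B' ≤ lam a b * lam b a := by
  obtain ⟨ha₀, ha₁⟩ := ha
  obtain ⟨hb₀, hb₁⟩ := hb
  obtain ⟨c₁, hc₁⟩ := exists_U_subset_homothety_image_L ha₀ (by linarith) hb₀ hb₁
  obtain ⟨c₂, hc₂⟩ := exists_U_subset_homothety_image_L hb₀ (by linarith) ha₀ ha₁
  have hB : B' ⊆ AffineMap.homothety c₁ (lam a b) '' A' :=
    hUb.trans (hc₁.trans (Set.image_mono hLa))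
  have hA : A' ⊆ AffineMap.homothety c₂ (lam b a) '' B' :=
    hUa.trans (hc₂.trans (Set.image_mono hLb))
  have hab := three_halves_le_lam ha₀ b
  have hba := three_halves_le_lam hb₀ a
  exact ⟨⟨c₁, c₂, hB, hA, hA.trans (Set.image_mono hB)⟩,
    BMdist_le_mul_of_subset_homothety_image (by linarith) (by linarith)
      (one_lt_mul (by linarith) (by linarith)).ne' hB hA⟩

theorem stmt_11 (a b : ℝ) (ha : a ∈ Set.Ico (0 : ℝ) (1 / 2)) (hb : b ∈ Set.Ico (0 : ℝ) (1 / 2))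
    (A' B' : Set (ℝ × ℝ)) (hA : IsConvexBody A') (hB : IsConvexBody B')
    (hLa : L a ⊆ A') (hUa : A' ⊆ U a) (hLb : L b ⊆ B') (hUb : B' ⊆ U b) :
    (∃ (c₁ c₂ : ℝ × ℝ),
      B' ⊆ AffineMap.homothety c₁ (lam a b) '' A' ∧
      A' ⊆ AffineMap.homothety c₂ (lam b a) '' B' ∧
      A' ⊆ AffineMap.homothety c₂ (lam b a) ''
        (AffineMap.homothety c₁ (lam a b) '' A')) ∧
    BMdist A' B' ≤ lam a b * lam b a :=
  stmt_11_general ha hb hLa hUa hLb hUb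
end
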